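/- If ρ ∈ H¹((0,1); L²(𝕋^d)) is periodic in time (ρ(·,0) = ρ(·,1)) and satisfies ∂_s ρ(ξ,s) − (A(s)ρ(·,s))(ξ) = 0 for almost every (ξ,s) ∈ 𝕋^d × (0,1), then ρ is constant almost everywhere on 𝕋^{d+1}. -/

import Mathlib

open MeasureTheory

noncomputable section

/-- The periodicity cell `[0,1)^d`, identified with the torus `𝕋^d`. -/
def cube (d : ℕ) : Set (Fin d → ℝ) := Set.univ.pi fun _ => Set.Ico (0 : ℝ) 1

/-- The operator `A(s)` applied pointwise. -/
def Aop {d : ℕ} (a : (Fin d → ℝ) → ℝ) (μ : (Fin d → ℝ) → (Fin d → ℝ) → ℝ → ℝ)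
    (s : ℝ) (v : (Fin d → ℝ) → ℝ) (ξ : Fin d → ℝ) : ℝ :=
  ∫ η, a (ξ - η) * μ ξ η s * (v η - v ξ)

/-!
Since the kernel `K s ξ η = a (ξ - η) * μ ξ η s` is symmetric and invariant under simultaneous
integer translations of `ξ` and `η`, swapping `ξ` and `η` gives
`∫_{𝕋^d} v · A(s)v = -½ ∫_{𝕋^d} ∫_{ℝ^d} K s ξ η * (v η - v ξ)² ≤ 0`. Testing the equation with
`ρ` and integrating over a time period, `∫ ρ ∂ₛρ` vanishes; hence so does `∫_{𝕋^d} ρ · A(s)ρ`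
for almost every `s`, that is, `ρ(η, s) = ρ(ξ, s)` for almost all `ξ`, `η` with `a (η - ξ) ≠ 0`.
Almost every `z` in the support of `a` is therefore an almost-everywhere period of `ρ(·, s)`.
These periods form a subgroup of positive measure, which is open by Steinhaus' theorem, and so
is the whole connected group: `ρ(·, s)` is constant. Finally `A(s)ρ = 0` almost everywhere makes
`ρ` constant in time.
-/

open Set Function
open scoped ENNReal NNReal

theorem integral_mul_eq_of_eq_add_integral {g u : ℝ → ℝ} {α β : ℝ}
    (hg : IntervalIntegrable g volume α β)
    (hu : ∀ s ∈ uIcc α β, u s = u α + ∫ τ in α..s, g τ) :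
    ∫ s in α..β, u s * g s = (u β ^ 2 - u α ^ 2) / 2 := by
  set w : ℝ → ℝ := fun s => u α + ∫ τ in α..s, g τ
  have w_ac : AbsolutelyContinuousOnInterval w α β :=
    (LipschitzWith.const (u α)).lipschitzOnWith.absolutelyContinuousOnInterval.add
      (hg.absolutelyContinuousOnInterval_intervalIntegral left_mem_uIcc)
  have deriv_w : ∀ᵐ s, s ∈ uIcc α β → deriv w s = g s := by
    filter_upwards [hg.ae_hasDerivAt_integral] with s hs hs'
    exact ((hs hs' α left_mem_uIcc).const_add (u α)).deriv
  calc ∫ s in α..β, u s * g s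
      = ∫ s in α..β, (deriv w s * w s + w s * deriv w s) / 2 := by
        refine intervalIntegral.integral_congr_ae ?_
        filter_upwards [deriv_w] with s hs hs'
        rw [hs (uIoc_subset_uIcc hs'), hu s (uIoc_subset_uIcc hs')]
        ring
    _ = (w β * w β - w α * w α) / 2 := by
        rw [intervalIntegral.integral_div, w_ac.integral_deriv_mul_eq_sub w_ac]
    _ = (u β ^ 2 - u α ^ 2) / 2 := by
        rw [hu β right_mem_uIcc]
        simp only [w, intervalIntegral.integral_same]
        ring

section FundamentalDomain

variable {Γ X : Type*} [AddGroup Γ] [AddAction Γ X] [MeasurableSpace X] {m : Measure X}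
  {D : Set X}

theorem isAddFundamentalDomain_preimage_fst (hD : IsAddFundamentalDomain Γ D m) :
    IsAddFundamentalDomain Γ (Prod.fst ⁻¹' D) (m.prod m) :=
  hD.preimage_of_equiv Measure.quasiMeasurePreserving_fst (e := id) bijective_id
    fun _ _ => rfl

theorem isAddFundamentalDomain_preimage_snd (hD : IsAddFundamentalDomain Γ D m) :
    IsAddFundamentalDomain Γ (Prod.snd ⁻¹' D) (m.prod m) :=
  hD.preimage_of_equiv Measure.quasiMeasurePreserving_snd (e := id) bijective_id
    fun _ _ => rfl

theorem prod_restrict_preimage_fst (m : Measure X) [SFinite m] (D : Set X) :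
    (m.prod m).restrict (Prod.fst ⁻¹' D) = (m.restrict D).prod m := by
  rw [← prod_univ, ← Measure.prod_restrict, Measure.restrict_univ]

variable [MeasurableConstVAdd Γ X] [SFinite m]

instance instMeasurableConstVAddProd : MeasurableConstVAdd Γ (X × X) where
  measurable_const_vadd γ := (measurable_const_vadd γ).prodMap (measurable_const_vadd γ)

instance instVAddInvariantMeasureProd [VAddInvariantMeasure Γ X m] :
    VAddInvariantMeasure Γ (X × X) (m.prod m) where
  measure_preimage_vadd γ _ hs :=
    ((measurePreserving_vadd γ m).prod (measurePreserving_vadd γ m)).measure_preimage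
      hs.nullMeasurableSet

variable [Countable Γ] [VAddInvariantMeasure Γ X m]

theorem lintegral_swap_of_invariant (hD : IsAddFundamentalDomain Γ D m) {F : X × X → ℝ≥0∞}
    (hF : ∀ (γ : Γ) x y, F (γ +ᵥ x, γ +ᵥ y) = F (x, y)) :
    ∫⁻ p, F p.swap ∂(m.restrict D).prod m = ∫⁻ p, F p ∂(m.restrict D).prod m := by
  rw [← prod_restrict_preimage_fst]
  calc ∫⁻ p in Prod.fst ⁻¹' D, F p.swap ∂m.prod m
      = ∫⁻ p in Prod.snd ⁻¹' D, F p ∂m.prod m :=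
        Measure.measurePreserving_swap.setLIntegral_comp_preimage_emb
          MeasurableEquiv.prodComm.measurableEmbedding F (Prod.snd ⁻¹' D)
    _ = ∫⁻ p in Prod.fst ⁻¹' D, F p ∂m.prod m :=
        (isAddFundamentalDomain_preimage_snd hD).setLIntegral_eq
          (isAddFundamentalDomain_preimage_fst hD) F fun γ p => hF γ p.1 p.2

theorem integral_swap_of_invariant {E : Type*} [NormedAddCommGroup E] [NormedSpace ℝ E]
    (hD : IsAddFundamentalDomain Γ D m) {F : X × X → E}
    (hF : ∀ (γ : Γ) x y, F (γ +ᵥ x, γ +ᵥ y) = F (x, y)) :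
    ∫ p, F p.swap ∂(m.restrict D).prod m = ∫ p, F p ∂(m.restrict D).prod m := by
  rw [← prod_restrict_preimage_fst]
  calc ∫ p in Prod.fst ⁻¹' D, F p.swap ∂m.prod m
      = ∫ p in Prod.snd ⁻¹' D, F p ∂m.prod m :=
        Measure.measurePreserving_swap.setIntegral_preimage_emb
          MeasurableEquiv.prodComm.measurableEmbedding F (Prod.snd ⁻¹' D)
    _ = ∫ p in Prod.fst ⁻¹' D, F p ∂m.prod m :=
        (isAddFundamentalDomain_preimage_snd hD).setIntegral_eq
          (isAddFundamentalDomain_preimage_fst hD) fun γ p => hF γ p.1 p.2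

theorem ae_of_ae_restrict_of_invariant {Y : Type*} [AddAction Γ Y] [MeasurableSpace Y]
    [MeasurableConstVAdd Γ Y] {n : Measure Y} [VAddInvariantMeasure Γ Y n] {D : Set Y}
    (hD : IsAddFundamentalDomain Γ D n) {P : Y → Prop}
    (hP : ∀ (γ : Γ) y, P (γ +ᵥ y) ↔ P y) (h : ∀ᵐ y ∂n.restrict D, P y) : ∀ᵐ y ∂n, P y := by
  refine hD.measure_zero_of_invariant _ (fun γ => ?_) ?_
  · ext y
    rw [Set.mem_vadd_set_iff_neg_vadd_mem]
    exact not_congr (hP (-γ) y)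
  · rwa [ae_iff, Measure.restrict_apply₀' hD.nullMeasurableSet] at h

end FundamentalDomain

/-- A bounded symmetric jump kernel on `X`, invariant under the diagonal action of `Γ`. For
`X = ℝ^d` and `Γ = ℤ^d` these are the kernels `a (ξ - η) * μ ξ η s` of the operators `A(s)`. The
constant `M` bounds the total jump rate. -/
structure IsInvariantSymmetricKernel (Γ : Type*) {X : Type*} [AddGroup Γ] [AddAction Γ X]
    [MeasurableSpace X] (m : Measure X) (M : ℝ≥0) (K : X → X → ℝ) : Prop where
  measurable : Measurable (uncurry K)
  nonneg : ∀ x y, 0 ≤ K x y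
  symm : ∀ x y, K x y = K y x
  vadd_vadd : ∀ (γ : Γ) x y, K (γ +ᵥ x) (γ +ᵥ y) = K x y
  lintegral_enorm_le : ∀ x, ∫⁻ y, ‖K x y‖ₑ ∂m ≤ M

/-- The nonlocal operator with kernel `K`, the generator of the jump process with rates `K`, applied
pointwise. It takes the junk value `0` where the integrand is not integrable. -/
def nonlocalOp {X : Type*} [MeasurableSpace X] (m : Measure X) (K : X → X → ℝ) (v : X → ℝ)
    (x : X) : ℝ :=
  ∫ y, K x y * (v y - v x) ∂m

/-- A nonnegative function controlling both `nonlocalOp m K v` and `v * nonlocalOp m K v`; being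
`ℝ≥0∞`-valued, it can be integrated over `D` before integrability of the operator is known. -/
def squareMajorant {X : Type*} [MeasurableSpace X] (m : Measure X) (K : X → X → ℝ) (v : X → ℝ)
    (x : X) : ℝ≥0∞ :=
  ∫⁻ y, ‖K x y * (v x ^ 2 + v y ^ 2)‖ₑ ∂m

theorem enorm_mul_le_two_mul_enorm_mul {k c b : ℝ} (h : |c| ≤ 2 * b) :
    ‖k * c‖ₑ ≤ 2 * ‖k * b‖ₑ := by
  have h_norm : ‖k * c‖ ≤ ‖2 * (k * b)‖ := by
    rw [mul_left_comm, norm_mul, norm_mul]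
    exact mul_le_mul_of_nonneg_left (h.trans (le_abs_self _)) (norm_nonneg k)
  calc ‖k * c‖ₑ ≤ ‖2 * (k * b)‖ₑ := enorm_le_iff_norm_le.2 h_norm
    _ = 2 * ‖k * b‖ₑ := by rw [enorm_mul, Real.enorm_of_nonneg zero_le_two, ENNReal.ofReal_ofNat]

theorem abs_mul_sub_le (r t : ℝ) : |r * (t - r)| ≤ 2 * (r ^ 2 + t ^ 2) :=
  abs_le.2 ⟨by nlinarith [sq_nonneg (r + t)], by nlinarith [sq_nonneg (r - t)]⟩

theorem abs_sub_le_one_add (r t : ℝ) : |t - r| ≤ 2 * (1 + (r ^ 2 + t ^ 2)) :=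
  abs_le.2 ⟨by nlinarith [sq_nonneg (r - 1), sq_nonneg (t + 1)],
    by nlinarith [sq_nonneg (r + 1), sq_nonneg (t - 1)]⟩

section Kernel

variable {Γ X : Type*} [AddGroup Γ] [AddAction Γ X] [MeasurableSpace X] {m : Measure X}
  {D : Set X} {M : ℝ≥0} {K : X → X → ℝ} {v : X → ℝ}

theorem enorm_mul_nonlocalOp_le (m : Measure X) (K : X → X → ℝ) (v : X → ℝ) (x : X) :
    ‖v x * nonlocalOp m K v x‖ₑ ≤ 2 * squareMajorant m K v x := by
  rw [nonlocalOp, ← integral_const_mul, squareMajorant,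
    ← lintegral_const_mul' _ _ ENNReal.ofNat_ne_top]
  refine (enorm_integral_le_lintegral_enorm _).trans (lintegral_mono fun y => ?_)
  rw [mul_left_comm]
  exact enorm_mul_le_two_mul_enorm_mul (abs_mul_sub_le (v x) (v y))

theorem IsInvariantSymmetricKernel.enorm_nonlocalOp_le (hK : IsInvariantSymmetricKernel Γ m M K)
    (v : X → ℝ) (x : X) :
    ‖nonlocalOp m K v x‖ₑ ≤ 2 * (M + squareMajorant m K v x) := by
  have hKx : Measurable (K x) := hK.measurable.of_uncurry_left
  calc ‖nonlocalOp m K v x‖ₑ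
      ≤ ∫⁻ y, ‖K x y * (v y - v x)‖ₑ ∂m := enorm_integral_le_lintegral_enorm _
    _ ≤ ∫⁻ y, 2 * (‖K x y‖ₑ + ‖K x y * (v x ^ 2 + v y ^ 2)‖ₑ) ∂m := by
        refine lintegral_mono fun y => ?_
        refine (enorm_mul_le_two_mul_enorm_mul (abs_sub_le_one_add (v x) (v y))).trans ?_
        rw [mul_add, mul_one]
        gcongr
        exact enorm_add_le _ _
    _ = 2 * (∫⁻ y, ‖K x y‖ₑ ∂m + squareMajorant m K v x) := by
        rw [lintegral_const_mul' _ _ ENNReal.ofNat_ne_top, lintegral_add_left hKx.enorm,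
          squareMajorant]
    _ ≤ 2 * (M + squareMajorant m K v x) := by
        gcongr
        exact hK.lintegral_enorm_le x

variable [MeasurableConstVAdd Γ X] [Countable Γ] [SFinite m] [VAddInvariantMeasure Γ X m]

theorem IsInvariantSymmetricKernel.lintegral_squareMajorant_le
    (hK : IsInvariantSymmetricKernel Γ m M K) (hD : IsAddFundamentalDomain Γ D m)
    (hv : Measurable v)
    (hv_inv : ∀ (γ : Γ) x, v (γ +ᵥ x) = v x) :
    ∫⁻ x in D, squareMajorant m K v x ∂m ≤ 2 * (M * ∫⁻ x in D, ‖v x ^ 2‖ₑ ∂m) := by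
  set F : X × X → ℝ≥0∞ := fun p => ‖K p.1 p.2‖ₑ * ‖v p.1 ^ 2‖ₑ
  have F_meas : Measurable F := hK.measurable.enorm.mul (by fun_prop)
  have F_inv (γ : Γ) (x y : X) : F (γ +ᵥ x, γ +ᵥ y) = F (x, y) := by
    simp only [F, hK.vadd_vadd, hv_inv]
  calc ∫⁻ x in D, squareMajorant m K v x ∂m
      ≤ ∫⁻ x in D, ∫⁻ y, F (x, y) + F (x, y).swap ∂m ∂m := by
        refine lintegral_mono fun x => lintegral_mono fun y => ?_
        simp only [F, Prod.swap_prod_mk, hK.symm y x, ← mul_add, enorm_mul]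
        gcongr
        exact enorm_add_le _ _
    _ = ∫⁻ p, F p ∂(m.restrict D).prod m + ∫⁻ p, F p.swap ∂(m.restrict D).prod m := by
        rw [← lintegral_add_left F_meas]
        exact (lintegral_prod (fun p => F p + F p.swap)
          (F_meas.add (F_meas.comp measurable_swap)).aemeasurable).symm
    _ = 2 * ∫⁻ x in D, ∫⁻ y, F (x, y) ∂m ∂m := by
        rw [lintegral_swap_of_invariant hD F_inv, ← two_mul, lintegral_prod _ F_meas.aemeasurable]
    _ ≤ 2 * ∫⁻ x in D, M * ‖v x ^ 2‖ₑ ∂m := by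
        gcongr with x
        simp only [F]
        rw [lintegral_mul_const' _ _ enorm_ne_top]
        gcongr
        exact hK.lintegral_enorm_le x
    _ = 2 * (M * ∫⁻ x in D, ‖v x ^ 2‖ₑ ∂m) := by
        rw [lintegral_const_mul' _ _ ENNReal.coe_ne_top]

theorem IsInvariantSymmetricKernel.integrable_mul (hK : IsInvariantSymmetricKernel Γ m M K)
    (hD : IsAddFundamentalDomain Γ D m) (hv : Measurable v)
    (hv_inv : ∀ (γ : Γ) x, v (γ +ᵥ x) = v x)
    (hv_sq : Integrable (fun x => v x ^ 2) (m.restrict D)) {c : X × X → ℝ} (hc : Measurable c)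
    (hcv : ∀ p, |c p| ≤ 2 * (v p.1 ^ 2 + v p.2 ^ 2)) :
    Integrable (fun p => K p.1 p.2 * c p) ((m.restrict D).prod m) := by
  have K_meas := hK.measurable
  refine ⟨(K_meas.mul hc).aestronglyMeasurable, ?_⟩
  calc ∫⁻ p, ‖K p.1 p.2 * c p‖ₑ ∂(m.restrict D).prod m
      ≤ ∫⁻ p, 2 * ‖K p.1 p.2 * (v p.1 ^ 2 + v p.2 ^ 2)‖ₑ ∂(m.restrict D).prod m :=
        lintegral_mono fun p => enorm_mul_le_two_mul_enorm_mul (hcv p)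
    _ = 2 * ∫⁻ x in D, squareMajorant m K v x ∂m := by
        rw [lintegral_const_mul' _ _ ENNReal.ofNat_ne_top,
          lintegral_prod _ (by fun_prop)]
        simp only [squareMajorant]
    _ ≤ 2 * (2 * (M * ∫⁻ x in D, ‖v x ^ 2‖ₑ ∂m)) := by
        gcongr
        exact hK.lintegral_squareMajorant_le hD hv hv_inv
    _ < ∞ := by
        have := hv_sq.hasFiniteIntegral
        finiteness

theorem IsInvariantSymmetricKernel.integral_mul_nonlocalOp
    (hK : IsInvariantSymmetricKernel Γ m M K) (hD : IsAddFundamentalDomain Γ D m)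
    (hv : Measurable v)
    (hv_inv : ∀ (γ : Γ) x, v (γ +ᵥ x) = v x)
    (hv_sq : Integrable (fun x => v x ^ 2) (m.restrict D)) :
    ∫ x in D, v x * nonlocalOp m K v x ∂m =
      -(∫ p, K p.1 p.2 * (v p.2 - v p.1) ^ 2 ∂(m.restrict D).prod m) / 2 := by
  set F : X × X → ℝ := fun p => K p.1 p.2 * (v p.1 * (v p.2 - v p.1))
  have F_int : Integrable F ((m.restrict D).prod m) :=
    hK.integrable_mul hD hv hv_inv hv_sq (by fun_prop) fun p => abs_mul_sub_le _ _
  have F_swap_int : Integrable (fun p => F p.swap) ((m.restrict D).prod m) := by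
    have : ∀ p : X × X, F p.swap = K p.1 p.2 * (v p.2 * (v p.1 - v p.2)) := fun p => by
      simp only [F, Prod.fst_swap, Prod.snd_swap, hK.symm p.2 p.1]
    simp only [this]
    refine hK.integrable_mul hD hv hv_inv hv_sq (by fun_prop) fun p => ?_
    exact (abs_mul_sub_le _ _).trans_eq (by ring)
  have F_inv (γ : Γ) (x y : X) : F (γ +ᵥ x, γ +ᵥ y) = F (x, y) := by
    simp only [F, hK.vadd_vadd, hv_inv]
  have integral_F : ∫ x in D, v x * nonlocalOp m K v x ∂m = ∫ p, F p ∂(m.restrict D).prod m := by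
    rw [integral_prod _ F_int]
    simp only [F, nonlocalOp, ← integral_const_mul, mul_left_comm]
  have energy_eq (p : X × X) : K p.1 p.2 * (v p.2 - v p.1) ^ 2 = -(F p + F p.swap) := by
    simp only [F, Prod.fst_swap, Prod.snd_swap, hK.symm p.2 p.1]
    ring
  simp only [energy_eq]
  rw [integral_neg, integral_add F_int F_swap_int, integral_swap_of_invariant hD F_inv, integral_F]
  ring

theorem IsInvariantSymmetricKernel.integral_mul_nonlocalOp_nonpos
    (hK : IsInvariantSymmetricKernel Γ m M K) (hD : IsAddFundamentalDomain Γ D m)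
    (hv : Measurable v)
    (hv_inv : ∀ (γ : Γ) x, v (γ +ᵥ x) = v x)
    (hv_sq : Integrable (fun x => v x ^ 2) (m.restrict D)) :
    ∫ x in D, v x * nonlocalOp m K v x ∂m ≤ 0 := by
  rw [hK.integral_mul_nonlocalOp hD hv hv_inv hv_sq]
  have : 0 ≤ ∫ p, K p.1 p.2 * (v p.2 - v p.1) ^ 2 ∂(m.restrict D).prod m :=
    integral_nonneg fun p => mul_nonneg (hK.nonneg _ _) (sq_nonneg _)
  linarith

theorem IsInvariantSymmetricKernel.ae_mul_sub_eq_zero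
    (hK : IsInvariantSymmetricKernel Γ m M K) (hD : IsAddFundamentalDomain Γ D m)
    (hv : Measurable v)
    (hv_inv : ∀ (γ : Γ) x, v (γ +ᵥ x) = v x)
    (hv_sq : Integrable (fun x => v x ^ 2) (m.restrict D))
    (h : ∫ x in D, v x * nonlocalOp m K v x ∂m = 0) :
    ∀ᵐ p ∂m.prod m, K p.1 p.2 * (v p.2 - v p.1) = 0 := by
  have energy_int : Integrable (fun p => K p.1 p.2 * (v p.2 - v p.1) ^ 2)
      ((m.restrict D).prod m) :=
    hK.integrable_mul hD hv hv_inv hv_sq (by fun_prop) fun p => by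
      rw [abs_of_nonneg (sq_nonneg _)]
      nlinarith [sq_nonneg (v p.1 + v p.2)]
  have energy_eq_zero : ∫ p, K p.1 p.2 * (v p.2 - v p.1) ^ 2 ∂(m.restrict D).prod m = 0 := by
    linarith [hK.integral_mul_nonlocalOp hD hv hv_inv hv_sq]
  refine ae_of_ae_restrict_of_invariant (isAddFundamentalDomain_preimage_fst hD)
    (fun γ p => ?_) ?_
  · change K (γ +ᵥ p.1) (γ +ᵥ p.2) * (v (γ +ᵥ p.2) - v (γ +ᵥ p.1)) = 0 ↔ _
    rw [hK.vadd_vadd, hv_inv, hv_inv]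
  rw [prod_restrict_preimage_fst]
  filter_upwards [(integral_eq_zero_iff_of_nonneg
    (fun p => mul_nonneg (hK.nonneg _ _) (sq_nonneg _)) energy_int).1 energy_eq_zero] with p hp
  simpa using hp

end Kernel

/-- A `Γ`-periodic, square-integrable solution of `∂ₛu = A(s)u` on `[α, β]`, `A(s)` having kernel
`K s`, with `u(·, α) = u(·, β)`. The equation is encoded in its time-integrated form, which is
equivalent to `u` being weakly differentiable in time with `∂ₛu = A(s)u`. -/
structure IsTimePeriodicSolution (Γ : Type*) {X : Type*} [AddGroup Γ] [AddAction Γ X]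
    [MeasurableSpace X] (m : Measure X) (D : Set X) (K : ℝ → X → X → ℝ) (α β : ℝ)
    (u : X → ℝ → ℝ) : Prop where
  measurable : Measurable (uncurry u)
  vadd : ∀ (γ : Γ) x s, u (γ +ᵥ x) s = u x s
  integrable_sq : Integrable (fun p : X × ℝ => u p.1 p.2 ^ 2)
    ((m.restrict D).prod (volume.restrict (Ioo α β)))
  eq_add_integral : ∀ᵐ x ∂m.restrict D, ∀ s ∈ Icc α β,
    u x s = u x α + ∫ τ in α..s, nonlocalOp m (K τ) (u · τ) x
  periodic : ∀ᵐ x ∂m.restrict D, u x β = u x α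

section Evolution

variable {Γ X : Type*} [AddGroup Γ] [AddAction Γ X] [MeasurableSpace X] {m : Measure X} [SFinite m]
  {D : Set X} {M : ℝ≥0} {K : ℝ → X → X → ℝ} {u : X → ℝ → ℝ} {α β : ℝ}

theorem measurable_nonlocalOp (hKm : Measurable fun q : X × X × ℝ => K q.2.2 q.1 q.2.1)
    (hu : Measurable (uncurry u)) :
    Measurable fun p : X × ℝ => nonlocalOp m (K p.2) (u · p.2) p.1 := by
  have integrand_meas : Measurable fun q : (X × ℝ) × X =>
      K q.1.2 q.1.1 q.2 * (u q.2 q.1.2 - u q.1.1 q.1.2) :=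
    (hKm.comp (by fun_prop : Measurable fun q : (X × ℝ) × X => (q.1.1, q.2, q.1.2))).mul
      (by fun_prop)
  exact integrand_meas.stronglyMeasurable.integral_prod_right'.measurable

theorem measurable_squareMajorant (hKm : Measurable fun q : X × X × ℝ => K q.2.2 q.1 q.2.1)
    (hu : Measurable (uncurry u)) :
    Measurable fun p : X × ℝ => squareMajorant m (K p.2) (u · p.2) p.1 := by
  have integrand_meas : Measurable fun q : (X × ℝ) × X =>
      K q.1.2 q.1.1 q.2 * (u q.1.1 q.1.2 ^ 2 + u q.2 q.1.2 ^ 2) :=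
    (hKm.comp (by fun_prop : Measurable fun q : (X × ℝ) × X => (q.1.1, q.2, q.1.2))).mul
      (by fun_prop)
  exact integrand_meas.enorm.lintegral_prod_right'

namespace IsTimePeriodicSolution

variable [MeasurableConstVAdd Γ X] [Countable Γ] [VAddInvariantMeasure Γ X m]

theorem lintegral_squareMajorant_ne_top (hu : IsTimePeriodicSolution Γ m D K α β u)
    (hKm : Measurable fun q : X × X × ℝ => K q.2.2 q.1 q.2.1)
    (hK : ∀ s, IsInvariantSymmetricKernel Γ m M (K s)) (hD : IsAddFundamentalDomain Γ D m) :
    ∫⁻ p, squareMajorant m (K p.2) (u · p.2) p.1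
      ∂(m.restrict D).prod (volume.restrict (Ioo α β)) ≠ ∞ := by
  have := hu.measurable
  refine ne_top_of_le_ne_top ?_ <| calc
    ∫⁻ p, squareMajorant m (K p.2) (u · p.2) p.1 ∂(m.restrict D).prod (volume.restrict (Ioo α β))
      = ∫⁻ s in Ioo α β, ∫⁻ x in D, squareMajorant m (K s) (u · s) x ∂m :=
        lintegral_prod_symm' _ (measurable_squareMajorant hKm hu.measurable)
    _ ≤ ∫⁻ s in Ioo α β, 2 * (M * ∫⁻ x in D, ‖u x s ^ 2‖ₑ ∂m) :=
        lintegral_mono fun s => (hK s).lintegral_squareMajorant_le hD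
          hu.measurable.of_uncurry_right (hu.vadd · · s)
    _ = 2 * (M * ∫⁻ p, ‖u p.1 p.2 ^ 2‖ₑ ∂(m.restrict D).prod (volume.restrict (Ioo α β))) := by
        rw [lintegral_const_mul' _ _ ENNReal.ofNat_ne_top,
          lintegral_const_mul' _ _ ENNReal.coe_ne_top, lintegral_prod_symm' _ (by fun_prop)]
  have := hu.integrable_sq.hasFiniteIntegral
  finiteness

theorem integrable_mul_nonlocalOp (hu : IsTimePeriodicSolution Γ m D K α β u)
    (hKm : Measurable fun q : X × X × ℝ => K q.2.2 q.1 q.2.1)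
    (hK : ∀ s, IsInvariantSymmetricKernel Γ m M (K s)) (hD : IsAddFundamentalDomain Γ D m) :
    Integrable (fun p : X × ℝ => u p.1 p.2 * nonlocalOp m (K p.2) (u · p.2) p.1)
      ((m.restrict D).prod (volume.restrict (Ioo α β))) := by
  refine ⟨(hu.measurable.mul (measurable_nonlocalOp hKm hu.measurable)).aestronglyMeasurable, ?_⟩
  calc ∫⁻ p, ‖u p.1 p.2 * nonlocalOp m (K p.2) (u · p.2) p.1‖ₑ
        ∂(m.restrict D).prod (volume.restrict (Ioo α β))
      ≤ 2 * ∫⁻ p, squareMajorant m (K p.2) (u · p.2) p.1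
          ∂(m.restrict D).prod (volume.restrict (Ioo α β)) := by
        rw [← lintegral_const_mul' _ _ ENNReal.ofNat_ne_top]
        exact lintegral_mono fun p => enorm_mul_nonlocalOp_le m (K p.2) (u · p.2) p.1
    _ < ∞ := ENNReal.mul_lt_top ENNReal.ofNat_lt_top
        (hu.lintegral_squareMajorant_ne_top hKm hK hD).lt_top

theorem ae_integrableOn_nonlocalOp (hu : IsTimePeriodicSolution Γ m D K α β u)
    (hKm : Measurable fun q : X × X × ℝ => K q.2.2 q.1 q.2.1)
    (hK : ∀ s, IsInvariantSymmetricKernel Γ m M (K s)) (hD : IsAddFundamentalDomain Γ D m) :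
    ∀ᵐ x ∂m.restrict D, IntegrableOn (fun s => nonlocalOp m (K s) (u · s) x) (Ioo α β) := by
  have majorant_meas := measurable_squareMajorant (m := m) hKm hu.measurable
  have majorant_fin := hu.lintegral_squareMajorant_ne_top hKm hK hD
  rw [lintegral_prod _ majorant_meas.aemeasurable] at majorant_fin
  filter_upwards [ae_lt_top majorant_meas.lintegral_prod_right' majorant_fin] with x hx
  refine ⟨((measurable_nonlocalOp hKm hu.measurable).comp
    measurable_prodMk_left).aestronglyMeasurable, ?_⟩
  calc ∫⁻ s in Ioo α β, ‖nonlocalOp m (K s) (u · s) x‖ₑ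
      ≤ ∫⁻ s in Ioo α β, 2 * (M + squareMajorant m (K s) (u · s) x) :=
        lintegral_mono fun s => (hK s).enorm_nonlocalOp_le (u · s) x
    _ = 2 * (M * volume (Ioo α β) + ∫⁻ s in Ioo α β, squareMajorant m (K s) (u · s) x) := by
        rw [lintegral_const_mul' _ _ ENNReal.ofNat_ne_top, lintegral_add_left measurable_const,
          setLIntegral_const]
    _ < ∞ := ENNReal.mul_lt_top ENNReal.ofNat_lt_top <|
        ENNReal.add_lt_top.2 ⟨ENNReal.mul_lt_top ENNReal.coe_lt_top measure_Ioo_lt_top, hx⟩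

theorem integral_mul_nonlocalOp_eq_zero (hu : IsTimePeriodicSolution Γ m D K α β u)
    (hKm : Measurable fun q : X × X × ℝ => K q.2.2 q.1 q.2.1)
    (hK : ∀ s, IsInvariantSymmetricKernel Γ m M (K s)) (hD : IsAddFundamentalDomain Γ D m)
    (hαβ : α ≤ β) :
    ∫ s in Ioo α β, ∫ x in D, u x s * nonlocalOp m (K s) (u · s) x ∂m = 0 := by
  rw [← integral_integral_swap (hu.integrable_mul_nonlocalOp hKm hK hD)]
  refine integral_eq_zero_of_ae ?_
  filter_upwards [hu.ae_integrableOn_nonlocalOp hKm hK hD, hu.eq_add_integral, hu.periodic]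
    with x x_int x_eq x_per
  rw [← integral_Ioc_eq_integral_Ioo, ← intervalIntegral.integral_of_le hαβ,
    integral_mul_eq_of_eq_add_integral
      ((intervalIntegrable_iff_integrableOn_Ioo_of_le hαβ).2 x_int) (by rwa [uIcc_of_le hαβ]),
    x_per, sub_self, zero_div, Pi.zero_apply]

theorem ae_ae_mul_sub_eq_zero (hu : IsTimePeriodicSolution Γ m D K α β u)
    (hKm : Measurable fun q : X × X × ℝ => K q.2.2 q.1 q.2.1)
    (hK : ∀ s, IsInvariantSymmetricKernel Γ m M (K s)) (hD : IsAddFundamentalDomain Γ D m)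
    (hαβ : α ≤ β) :
    ∀ᵐ s ∂volume.restrict (Ioo α β), ∀ᵐ p ∂m.prod m, K s p.1 p.2 * (u p.2 s - u p.1 s) = 0 := by
  have hus (s : ℝ) : Measurable (u · s) := hu.measurable.of_uncurry_right
  have slice_sq := hu.integrable_sq.prod_left_ae
  have slice_nonpos : ∀ᵐ s ∂volume.restrict (Ioo α β),
      0 ≤ -∫ x in D, u x s * nonlocalOp m (K s) (u · s) x ∂m := by
    filter_upwards [slice_sq] with s hs
    exact neg_nonneg.2 <|
      (hK s).integral_mul_nonlocalOp_nonpos hD (hus s) (hu.vadd · · s) hs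
  have slice_zero := (integral_eq_zero_iff_of_nonneg_ae slice_nonpos
    (hu.integrable_mul_nonlocalOp hKm hK hD).integral_prod_right.neg).1
      (by rw [integral_neg, hu.integral_mul_nonlocalOp_eq_zero hKm hK hD hαβ, neg_zero])
  filter_upwards [slice_sq, slice_zero] with s s_sq s_zero
  exact (hK s).ae_mul_sub_eq_zero hD (hus s) (hu.vadd · · s) s_sq (neg_eq_zero.1 s_zero)

theorem ae_eq_initial (hu : IsTimePeriodicSolution Γ m D K α β u)
    (hKm : Measurable fun q : X × X × ℝ => K q.2.2 q.1 q.2.1)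
    (hK : ∀ s, IsInvariantSymmetricKernel Γ m M (K s)) (hD : IsAddFundamentalDomain Γ D m)
    (hαβ : α ≤ β) :
    ∀ᵐ x ∂m.restrict D, ∀ s ∈ Icc α β, u x s = u x α := by
  have op_zero : ∀ᵐ s ∂volume.restrict (Ioo α β), ∀ᵐ x ∂m.restrict D,
      nonlocalOp m (K s) (u · s) x = 0 := by
    filter_upwards [hu.ae_ae_mul_sub_eq_zero hKm hK hD hαβ] with s hs
    filter_upwards [ae_restrict_of_ae (Measure.ae_ae_of_ae_prod hs)] with x hx
    exact integral_eq_zero_of_ae hx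
  have zero_meas : MeasurableSet {p : X × ℝ | nonlocalOp m (K p.2) (u · p.2) p.1 = 0} :=
    measurableSet_eq_fun (measurable_nonlocalOp hKm hu.measurable) measurable_const
  filter_upwards [(Measure.ae_ae_comm zero_meas).2 op_zero, hu.eq_add_integral]
    with x x_zero x_eq s hs
  rw [x_eq s hs, add_eq_left, intervalIntegral.integral_of_le hs.1, integral_Ioc_eq_integral_Ioo]
  exact integral_eq_zero_of_ae
    (ae_mono (Measure.restrict_mono (Ioo_subset_Ioo_right hs.2) le_rfl) x_zero)

end IsTimePeriodicSolution

end Evolution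

section Ergodicity

variable {G E : Type*} [AddGroup G] [MeasurableSpace G] {m : Measure G} {v : G → E}

/-- The group of almost-everywhere periods of `v`: those translations under which the class of `v`
modulo null sets is invariant. -/
def aePeriods [MeasurableAdd G] (m : Measure G) [m.IsAddLeftInvariant] (v : G → E) :
    AddSubgroup G where
  carrier := {z | ∀ᵐ ξ ∂m, v (z + ξ) = v ξ}
  zero_mem' := by simp
  add_mem' {y z} hy hz := show ∀ᵐ ξ ∂m, v (y + z + ξ) = v ξ by
    filter_upwards [(measurePreserving_add_left m z).quasiMeasurePreserving.ae hy, hz] with ξ h h'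
    rw [add_assoc, h, h']
  neg_mem' {z} hz := show ∀ᵐ ξ ∂m, v (-z + ξ) = v ξ by
    filter_upwards [(measurePreserving_add_left m (-z)).quasiMeasurePreserving.ae hz] with ξ h
    rw [← h, add_neg_cancel_left]

variable [TopologicalSpace G] [IsTopologicalAddGroup G] [LocallyCompactSpace G]
  [SecondCountableTopology G] [BorelSpace G] [m.IsAddHaarMeasure]

variable [MeasurableSpace E] [MeasurableEq E]

theorem measurableSet_aePeriods (hv : Measurable v) : MeasurableSet (aePeriods m v : Set G) := by
  have non_period_meas : MeasurableSet {p : G × G | v (p.1 + p.2) ≠ v p.2} :=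
    (measurableSet_eq_fun (by fun_prop) (by fun_prop)).compl
  exact measurable_measure_prodMk_left non_period_meas (measurableSet_singleton 0)

theorem aePeriods_eq_top [ConnectedSpace G] (hv : Measurable v)
    (h : m (aePeriods m v : Set G) ≠ 0) : aePeriods m v = ⊤ := by
  have nhds_zero : (aePeriods m v : Set G) ∈ nhds 0 := by
    refine Filter.mem_of_superset (Measure.sub_mem_nhds_zero_of_addHaar_pos m _
      (measurableSet_aePeriods hv) (pos_iff_ne_zero.2 h)) ?_
    rintro _ ⟨y, hy, z, hz, rfl⟩
    exact sub_mem hy hz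
  have isOpen := AddSubgroup.isOpen_of_mem_nhds _ nhds_zero
  exact SetLike.coe_injective <|
    IsClopen.eq_univ ⟨AddSubgroup.isClosed_of_isOpen _ isOpen, isOpen⟩ ⟨0, zero_mem _⟩

theorem exists_ae_eq_const_of_aePeriods_eq_top [m.IsAddRightInvariant] (hv : Measurable v)
    (h : aePeriods m v = ⊤) :
    ∃ c, ∀ᵐ ξ ∂m, v ξ = c := by
  have period_meas : MeasurableSet {p : G × G | v (p.1 + p.2) = v p.2} :=
    measurableSet_eq_fun (by fun_prop) (by fun_prop)
  have swapped : ∀ᵐ ξ ∂m, ∀ᵐ z ∂m, v (z + ξ) = v ξ :=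
    (Measure.ae_ae_comm period_meas).1 (ae_of_all _ fun z => h.ge (AddSubgroup.mem_top z))
  obtain ⟨ξ, hξ⟩ := swapped.exists
  refine ⟨v ξ, ?_⟩
  filter_upwards [(measurePreserving_add_right m (-ξ)).quasiMeasurePreserving.ae hξ] with z hz
  rwa [neg_add_cancel_right] at hz

theorem exists_ae_eq_const_of_sub_mem [m.IsAddRightInvariant] [ConnectedSpace G] (hv : Measurable v)
    {S : Set G} (hS : m S ≠ 0) (h : ∀ᵐ p ∂m.prod m, p.2 - p.1 ∈ S → v p.2 = v p.1) :
    ∃ c, ∀ᵐ ξ ∂m, v ξ = c := by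
  have shifted : ∀ᵐ p ∂m.prod m, p.1 ∈ S → v (p.1 + p.2) = v p.2 := by
    filter_upwards [((measurePreserving_prod_add_swap_right m m).quasiMeasurePreserving.ae h)]
      with p hp
    simpa using hp
  have ae_mem : ∀ᵐ z ∂m, z ∈ S → z ∈ aePeriods m v := by
    filter_upwards [Measure.ae_ae_of_ae_prod shifted] with z hz hzS
    exact hz.mono fun ξ hξ => hξ hzS
  refine exists_ae_eq_const_of_aePeriods_eq_top hv (aePeriods_eq_top hv fun h0 => hS ?_)
  exact measure_mono_null_ae ae_mem h0

end Ergodicity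

theorem isInvariantSymmetricKernel_sub_mul {G : Type*} [AddCommGroup G] [MeasurableSpace G]
    [MeasurableAdd₂ G] [MeasurableNeg G] {m : Measure G} [m.IsAddLeftInvariant] [m.IsNegInvariant]
    {Γ : AddSubgroup G} {a : G → ℝ} {b : G → G → ℝ} {B : ℝ}
    (ha : Measurable a) (ha_nonneg : ∀ z, 0 ≤ a z) (ha_int : Integrable a m)
    (ha_symm : ∀ z, a (-z) = a z) (hb : Measurable (uncurry b))
    (hb_nonneg : ∀ x y, 0 ≤ b x y) (hb_le : ∀ x y, b x y ≤ B) (hb_symm : ∀ x y, b x y = b y x)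
    (hb_vadd : ∀ (γ : Γ) x y, b (γ +ᵥ x) (γ +ᵥ y) = b x y) :
    IsInvariantSymmetricKernel Γ m (B.toNNReal * (∫⁻ z, ‖a z‖ₑ ∂m).toNNReal)
      fun x y => a (x - y) * b x y where
  measurable := (ha.comp (by fun_prop)).mul hb
  nonneg x y := mul_nonneg (ha_nonneg _) (hb_nonneg x y)
  symm x y := by rw [hb_symm x y, ← ha_symm, neg_sub]
  vadd_vadd γ x y := by
    rw [hb_vadd, AddSubgroup.vadd_def, AddSubgroup.vadd_def, vadd_eq_add, vadd_eq_add,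
      add_sub_add_left_eq_sub]
  lintegral_enorm_le x := calc
    ∫⁻ y, ‖a (x - y) * b x y‖ₑ ∂m ≤ ∫⁻ y, B.toNNReal * ‖a (x - y)‖ₑ ∂m := by
        refine lintegral_mono fun y => ?_
        rw [enorm_mul, mul_comm, Real.enorm_of_nonneg (hb_nonneg x y)]
        gcongr
        exact ENNReal.ofReal_le_ofReal (hb_le x y)
    _ = B.toNNReal * ∫⁻ z, ‖a z‖ₑ ∂m := by
        rw [lintegral_const_mul' _ _ ENNReal.coe_ne_top,
          lintegral_sub_left_eq_self (fun z => ‖a z‖ₑ) x]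
    _ = ↑(B.toNNReal * (∫⁻ z, ‖a z‖ₑ ∂m).toNNReal) := by
        rw [ENNReal.coe_mul, ENNReal.coe_toNNReal ha_int.hasFiniteIntegral.ne]

section IntegerLattice

variable {d : ℕ}

/-- The lattice `ℤ^d` in `ℝ^d`, as an additive subgroup so that it acts on `ℝ^d` by translation. -/
abbrev integerLattice (d : ℕ) : AddSubgroup (Fin d → ℝ) :=
  (Submodule.span ℤ (range (Pi.basisFun ℝ (Fin d)))).toAddSubgroup

instance : Countable (integerLattice d) :=
  inferInstanceAs <| Countable (Submodule.span ℤ (range (Pi.basisFun ℝ (Fin d))))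

theorem isAddFundamentalDomain_cube (d : ℕ) :
    IsAddFundamentalDomain (integerLattice d) (cube d) volume := by
  rw [cube, ← ZSpan.fundamentalDomain_pi_basisFun]
  exact ZSpan.isAddFundamentalDomain' (Pi.basisFun ℝ (Fin d)) volume

theorem exists_eq_intCast_of_mem_integerLattice {x : Fin d → ℝ} (hx : x ∈ integerLattice d) :
    ∃ k : Fin d → ℤ, x = fun i => (k i : ℝ) := by
  choose k hk using ((Pi.basisFun ℝ (Fin d)).mem_span_iff_repr_mem ℤ x).1 hx
  exact ⟨k, funext fun i => by simpa using (hk i).symm⟩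

theorem integerLattice_vadd_eq {E : Type*} {f : (Fin d → ℝ) → E}
    (hf : ∀ ξ, ∀ k : Fin d → ℤ, f (ξ + fun i => (k i : ℝ)) = f ξ) (γ : integerLattice d)
    (ξ : Fin d → ℝ) : f (γ +ᵥ ξ) = f ξ := by
  obtain ⟨k, hk⟩ := exists_eq_intCast_of_mem_integerLattice γ.2
  rw [AddSubgroup.vadd_def, hk, vadd_eq_add, add_comm, hf]

theorem integerLattice_vadd_vadd_eq {E : Type*} {f : (Fin d → ℝ) → (Fin d → ℝ) → E}
    (hf₁ : ∀ ξ η, ∀ k : Fin d → ℤ, f (ξ + fun i => (k i : ℝ)) η = f ξ η)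
    (hf₂ : ∀ ξ η, ∀ k : Fin d → ℤ, f ξ (η + fun i => (k i : ℝ)) = f ξ η) (γ : integerLattice d)
    (ξ η : Fin d → ℝ) : f (γ +ᵥ ξ) (γ +ᵥ η) = f ξ η := by
  rw [integerLattice_vadd_eq (f := (f · (γ +ᵥ η))) (hf₁ · (γ +ᵥ η)),
    integerLattice_vadd_eq (hf₂ ξ)]

end IntegerLattice

theorem stmt7_general {Γ G : Type*} [AddGroup Γ] [Countable Γ] [AddGroup G] [TopologicalSpace G]
    [IsTopologicalAddGroup G] [LocallyCompactSpace G] [SecondCountableTopology G] [ConnectedSpace G]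
    [MeasurableSpace G] [BorelSpace G] [AddAction Γ G] [MeasurableConstVAdd Γ G] {m : Measure G}
    [m.IsAddHaarMeasure] [m.IsAddRightInvariant] [VAddInvariantMeasure Γ G m] {D S : Set G}
    {M : ℝ≥0} {K : ℝ → G → G → ℝ} {α β : ℝ} {ρ : G → ℝ → ℝ}
    (hρ : IsTimePeriodicSolution Γ m D K α β ρ)
    (hKm : Measurable fun q : G × G × ℝ => K q.2.2 q.1 q.2.1)
    (hK : ∀ s, IsInvariantSymmetricKernel Γ m M (K s)) (hD : IsAddFundamentalDomain Γ D m)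
    (hαβ : α < β) (hS : m S ≠ 0) (hKS : ∀ s ∈ Ioo α β, ∀ ξ η, η - ξ ∈ S → K s ξ η ≠ 0) :
    ∃ c, ∀ᵐ p ∂(m.prod volume).restrict (D ×ˢ Ioo α β), ρ p.1 p.2 = c := by
  have time_neBot : (ae (volume.restrict (Ioo α β))).NeBot :=
    ae_restrict_neBot.2 (by simpa using hαβ)
  obtain ⟨s, hs, slice_period⟩ := ((ae_restrict_mem measurableSet_Ioo).and
    (hρ.ae_ae_mul_sub_eq_zero hKm hK hD hαβ.le)).exists
  obtain ⟨c, slice_const⟩ : ∃ c, ∀ᵐ ξ ∂m, ρ ξ s = c := by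
    refine exists_ae_eq_const_of_sub_mem hρ.measurable.of_uncurry_right hS ?_
    filter_upwards [slice_period] with p hp hpS
    exact sub_eq_zero.1 ((mul_eq_zero.1 hp).resolve_left (hKS s hs _ _ hpS))
  refine ⟨c, ?_⟩
  have const_meas : MeasurableSet {p : G × ℝ | ρ p.1 p.2 = c} :=
    measurableSet_eq_fun hρ.measurable measurable_const
  rw [← Measure.prod_restrict, Measure.ae_prod_iff_ae_ae const_meas]
  filter_upwards [ae_restrict_of_ae slice_const, hρ.ae_eq_initial hKm hK hD hαβ.le] with ξ hξ hξ'
  filter_upwards [ae_restrict_mem measurableSet_Ioo] with t ht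
  exact ((hξ' t (Ioo_subset_Icc_self ht)).trans (hξ' s (Ioo_subset_Icc_self hs)).symm).trans hξ

/-- If `ρ ∈ H¹((0,1); L²(𝕋^d))` is time-periodic and solves `∂_s ρ - A(s)ρ = 0`
(in the equivalent integrated-in-time form), then `ρ` is constant a.e. on `𝕋^{d+1}`. -/
theorem stmt7 {d : ℕ} (hd : 1 ≤ d)
    (a : (Fin d → ℝ) → ℝ) (μ : (Fin d → ℝ) → (Fin d → ℝ) → ℝ → ℝ) (μm μp : ℝ)
    (hameas : Measurable a) (hanonneg : ∀ z, 0 ≤ a z)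
    (haint : Integrable a) (hamass : ∫ z, a z = 1)
    (hamom : Integrable (fun z => ‖z‖ ^ 2 * a z))
    (hasymm : ∀ z, a (-z) = a z)
    (hμmeas : Measurable fun p : (Fin d → ℝ) × (Fin d → ℝ) × ℝ => μ p.1 p.2.1 p.2.2)
    (hμper₁ : ∀ ξ η s, ∀ k : Fin d → ℤ, μ (ξ + fun i => (k i : ℝ)) η s = μ ξ η s)
    (hμper₂ : ∀ ξ η s, ∀ k : Fin d → ℤ, μ ξ (η + fun i => (k i : ℝ)) s = μ ξ η s)
    (hμper₃ : ∀ ξ η s, μ ξ η (s + 1) = μ ξ η s)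
    (hμsymm : ∀ ξ η s, μ ξ η s = μ η ξ s)
    (hμm : 0 < μm) (hμlb : ∀ ξ η s, μm ≤ μ ξ η s) (hμub : ∀ ξ η s, μ ξ η s ≤ μp)
    (ρ : (Fin d → ℝ) → ℝ → ℝ)
    (hρmeas : Measurable fun p : (Fin d → ℝ) × ℝ => ρ p.1 p.2)
    (hρper₁ : ∀ ξ s, ∀ k : Fin d → ℤ, ρ (ξ + fun i => (k i : ℝ)) s = ρ ξ s)
    (hρper₂ : ∀ ξ s, ρ ξ (s + 1) = ρ ξ s)
    (hρL2 : IntegrableOn (fun p : (Fin d → ℝ) × ℝ => (ρ p.1 p.2) ^ 2)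
      (cube d ×ˢ Set.Ioo (0 : ℝ) 1))
    (hρeq : ∀ᵐ ξ ∂(volume : Measure (Fin d → ℝ)), ∀ s ∈ Set.Icc (0 : ℝ) 1,
      ρ ξ s = ρ ξ 0 + ∫ τ in (0 : ℝ)..s, Aop a μ τ (fun η => ρ η τ) ξ) :
    ∃ c : ℝ, ∀ᵐ p ∂(volume.restrict (cube d ×ˢ Set.Ioo (0 : ℝ) 1)),
      ρ (Prod.fst p) (Prod.snd p) = c := by
  have kernel_meas : Measurable fun q : (Fin d → ℝ) × (Fin d → ℝ) × ℝ =>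
      a (q.1 - q.2.1) * μ q.1 q.2.1 q.2.2 :=
    (hameas.comp (by fun_prop)).mul hμmeas
  have kernel (s : ℝ) := isInvariantSymmetricKernel_sub_mul hameas hanonneg haint hasymm
    (b := (μ · · s))
    (hμmeas.comp (by fun_prop : Measurable fun p : (Fin d → ℝ) × (Fin d → ℝ) => (p.1, p.2, s)))
    (fun ξ η => hμm.le.trans (hμlb ξ η s)) (hμub · · s) (hμsymm · · s)
    (integerLattice_vadd_vadd_eq (f := (μ · · s)) (hμper₁ · · s) (hμper₂ · · s))
  have solution : IsTimePeriodicSolution (integerLattice d) volume (cube d)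
      (fun s ξ η => a (ξ - η) * μ ξ η s) 0 1 ρ :=
    { measurable := hρmeas
      vadd := fun γ ξ s => integerLattice_vadd_eq (f := (ρ · s)) (hρper₁ · s) γ ξ
      integrable_sq := by rwa [Measure.prod_restrict]
      eq_add_integral := ae_restrict_of_ae hρeq
      periodic := ae_of_all _ fun ξ => by simpa using hρper₂ ξ 0 }
  have support_ne_zero : volume (support a) ≠ 0 :=
    ((integral_pos_iff_support_of_nonneg hanonneg haint).1 (hamass ▸ one_pos)).ne'
  exact stmt7_general solution kernel_meas kernel (isAddFundamentalDomain_cube d) one_pos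
    support_ne_zero fun s _ ξ η h =>
      mul_ne_zero (by rwa [← hasymm, neg_sub]) (hμm.trans_le (hμlb ξ η s)).ne'
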